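/- Let p be a prime, f ∈ {0,1,…,p−1} an integer, and ε, θ ∈ ℝ. Then for any two distinct points x₁ ≠ x₂ of the constellation Λ_p, | ((f+ε)·x₁ + θ)* − ((f+ε)·x₂ + θ)* | ≥ (L/p)·δ(p,ε). In particular the minimum distance of the constellation { ((f+ε)·x + θ)* : x ∈ Λ_p } is at least (L/p)·δ(p,ε). -/

import Mathlib

open MeasureTheory ProbabilityTheory Real Filter
open scoped ENNReal

noncomputable section

/-- Reduction of `x` modulo the half-open interval `[a, b)`. -/
def modIco (a b x : ℝ) : ℝ := a + (b - a) * Int.fract ((x - a) / (b - a))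

/-- `L = √12`. -/
def Lc : ℝ := Real.sqrt 12

/-- `x*`: reduction of `x` modulo the basic interval `I = [-L/2, L/2)`. -/
def starI (x : ℝ) : ℝ := modIco (-(Lc / 2)) (Lc / 2) x

/-- `δ(p, γ) = min_{l ∈ {1,…,p−1}} |l·γ − ⌊l·γ⌉|`. -/
def deltaP (p : ℕ) (γ : ℝ) : ℝ :=
  sInf {d : ℝ | ∃ l : ℕ, 1 ≤ l ∧ l ≤ p - 1 ∧ d = |(l : ℝ) * γ - round ((l : ℝ) * γ)|}

/-- The set `P'(γ)` of admissible primes (depends on the SNR). -/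
def Pgood (SNR : ℝ) (γ : ℝ) : Set ℕ :=
  {p | p.Prime ∧
    Real.exp (-(3 * SNR / (2 * (p : ℝ) ^ 2)) * (modIco (-(1/4)) (1/4) γ) ^ 2) <
      1 - 2 * (p : ℝ) * Real.exp (-(3 * SNR / 8))}

/-- First rate expression in the achievable-rate theorem. -/
def rateA (SNR : ℝ) (p : ℕ) (γ : ℝ) : ℝ :=
  -(1/2) * Real.logb 2 (1/(p : ℝ)^2 + Real.sqrt (2 * π / (3 * SNR))
    + (1/(p : ℝ)) * Real.exp (-(3 * SNR / (2 * (p : ℝ)^2)) * (deltaP p γ)^2)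
    + 2 * Real.exp (-(3 * SNR / 8)))

/-- Second rate expression in the achievable-rate theorem. -/
def rateB (SNR : ℝ) (p : ℕ) (γ : ℝ) : ℝ :=
  -Real.logb 2 (1/(p : ℝ) + Real.sqrt (2 * π / (3 * (deltaP p γ)^2 * SNR))
    + 2 * Real.exp (-(3 * SNR / 8)))

/-- The `k`-th point of the constellation `Λ_p`. -/
def constPt (p : ℕ) (k : ℕ) : ℝ := starI (Lc / (p : ℝ) * (k : ℝ))

/-- The constellation `Λ_p` as a finite set of reals. -/
def constSet (p : ℕ) : Finset ℝ := (Finset.range p).image (constPt p)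

/-- The uniform probability measure on the constellation `Λ_p`. -/
def uniformConst (p : ℕ) : Measure ℝ :=
  (p : ℝ≥0∞)⁻¹ • ∑ k ∈ Finset.range p, Measure.dirac (constPt p k)

/-!
Put `c = L / p`. As `L = p c`, reduction modulo `L` does not change residues modulo `c`, and every
point of `Λ_p` is a multiple of `c`. Two distinct points differ by `m c` with `0 < |m| < p`, so
modulo `c` the integer `f` disappears and the difference of their images is `m ε c`. Its absolute
value is therefore at least `c` times the distance from `m ε` to the nearest integer.
-/

theorem modIco_eq_toIcoMod {a b : ℝ} (hab : a < b) (x : ℝ) :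
    modIco a b x = toIcoMod (sub_pos.2 hab) a x := by
  rw [modIco, toIcoMod_eq_add_fract_mul, mul_comm]

theorem modIco_mem_Ico {a b : ℝ} (hab : a < b) (x : ℝ) : modIco a b x ∈ Set.Ico a b := by
  simpa only [modIco_eq_toIcoMod hab, add_sub_cancel] using toIcoMod_mem_Ico (sub_pos.2 hab) a x

theorem modIco_modEq {a b : ℝ} (hab : a < b) (x : ℝ) : modIco a b x ≡ x [PMOD (b - a)] := by
  rw [modIco_eq_toIcoMod hab]
  exact AddCommGroup.modEq_iff_zsmul'.2 ⟨_, self_sub_toIcoMod _ a x⟩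

theorem Lc_pos : 0 < Lc :=
  Real.sqrt_pos.2 (by norm_num)

theorem starI_mem_Ico (x : ℝ) : starI x ∈ Set.Ico (-(Lc / 2)) (Lc / 2) :=
  modIco_mem_Ico (neg_lt_self (half_pos Lc_pos)) x

theorem starI_modEq (x : ℝ) : starI x ≡ x [PMOD Lc] := by
  simpa only [starI, sub_neg_eq_add, add_halves] using
    modIco_modEq (neg_lt_self (half_pos Lc_pos)) x

theorem starI_modEq_div {p : ℕ} (hp : p ≠ 0) (x : ℝ) : starI x ≡ x [PMOD (Lc / p)] := by
  have hL : p • (Lc / p) = Lc := by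
    rw [nsmul_eq_mul, mul_div_cancel₀ _ (Nat.cast_ne_zero.2 hp)]
  exact AddCommGroup.ModEq.of_nsmul (n := p) (hL.symm ▸ starI_modEq x)

theorem ne_zero_of_mem_constSet {p : ℕ} {x : ℝ} (hx : x ∈ constSet p) : p ≠ 0 := by
  rintro rfl
  simp [constSet] at hx

theorem mem_Ico_of_mem_constSet {p : ℕ} {x : ℝ} (hx : x ∈ constSet p) :
    x ∈ Set.Ico (-(Lc / 2)) (Lc / 2) := by
  obtain ⟨k, -, rfl⟩ := Finset.mem_image.1 hx
  exact starI_mem_Ico _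

theorem modEq_zero_of_mem_constSet {p : ℕ} {x : ℝ} (hx : x ∈ constSet p) :
    x ≡ 0 [PMOD (Lc / p)] := by
  have hp := ne_zero_of_mem_constSet hx
  obtain ⟨k, -, rfl⟩ := Finset.mem_image.1 hx
  refine (starI_modEq_div hp _).trans (AddCommGroup.modEq_zero_iff_eq_zsmul.2 ⟨k, ?_⟩)
  rw [zsmul_eq_mul, Int.cast_natCast, mul_comm]

theorem exists_sub_eq_mul_of_mem_constSet {p : ℕ} {x₁ x₂ : ℝ} (h₁ : x₁ ∈ constSet p)
    (h₂ : x₂ ∈ constSet p) (hne : x₁ ≠ x₂) :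
    ∃ m : ℤ, m ≠ 0 ∧ |m| < p ∧ x₁ - x₂ = m * (Lc / p) := by
  have hp : (0 : ℝ) < p := Nat.cast_pos.2 (Nat.pos_of_ne_zero (ne_zero_of_mem_constSet h₁))
  have hc : 0 < Lc / p := div_pos Lc_pos hp
  obtain ⟨m, hm⟩ : ∃ m : ℤ, x₁ - x₂ = m • (Lc / p) :=
    AddCommGroup.modEq_zero_iff_eq_zsmul.1 <| AddCommGroup.sub_modEq_zero.2 <|
      (modEq_zero_of_mem_constSet h₁).trans (modEq_zero_of_mem_constSet h₂).symm
  rw [zsmul_eq_mul] at hm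
  refine ⟨m, ?_, ?_, hm⟩
  · rintro rfl
    exact hne (sub_eq_zero.1 (by rw [hm, Int.cast_zero, zero_mul]))
  · have hlt : |x₁ - x₂| < Lc := by
      obtain ⟨hl₁, hu₁⟩ := mem_Ico_of_mem_constSet h₁
      obtain ⟨hl₂, hu₂⟩ := mem_Ico_of_mem_constSet h₂
      exact abs_sub_lt_iff.2 ⟨by linarith, by linarith⟩
    have hmp : |(m : ℝ)| * (Lc / p) < p * (Lc / p) := by
      rwa [mul_div_cancel₀ _ hp.ne', ← abs_of_pos hc, ← abs_mul, ← hm]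
    exact_mod_cast lt_of_mul_lt_mul_right hmp hc.le

theorem deltaP_le_abs_natCast_mul_sub {p l : ℕ} (hl : l ≠ 0) (hlp : l < p) (γ : ℝ) (n : ℤ) :
    deltaP p γ ≤ |l * γ - n| := by
  refine le_trans (csInf_le ⟨0, ?_⟩ ?_) (round_le (l * γ) n)
  · rintro _ ⟨_, _, _, rfl⟩
    exact abs_nonneg _
  · exact ⟨l, Nat.one_le_iff_ne_zero.2 hl, Nat.le_sub_one_of_lt hlp, rfl⟩

theorem deltaP_le_abs_intCast_mul_sub {p : ℕ} {m : ℤ} (hm : m ≠ 0) (hmp : |m| < p) (γ : ℝ)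
    (n : ℤ) : deltaP p γ ≤ |m * γ - n| := by
  obtain ⟨l, rfl | rfl⟩ := m.eq_nat_or_neg
  · simpa only [Int.cast_natCast] using
      deltaP_le_abs_natCast_mul_sub (by simpa using hm) (by simpa using hmp) γ n
  · calc
      deltaP p γ ≤ |l * γ - (-n : ℤ)| :=
        deltaP_le_abs_natCast_mul_sub (by simpa using hm) (by simpa using hmp) γ (-n)
      _ = |(-l : ℤ) * γ - n| := by
        rw [← abs_neg]
        push_cast
        ring_nf

theorem mul_deltaP_le_abs_of_modEq {p : ℕ} {m : ℤ} (hm : m ≠ 0) (hmp : |m| < p) {c γ z : ℝ}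
    (hc : 0 ≤ c) (hz : z ≡ m * γ * c [PMOD c]) : c * deltaP p γ ≤ |z| := by
  obtain ⟨n, hn⟩ := AddCommGroup.modEq_iff_zsmul'.1 hz
  rw [zsmul_eq_mul] at hn
  calc
    c * deltaP p γ ≤ c * |m * γ - n| := by
      gcongr
      exact deltaP_le_abs_intCast_mul_sub hm hmp γ n
    _ = |c * (m * γ - n)| := by rw [abs_mul, abs_of_nonneg hc]
    _ = |z| := by
      congr 1
      linear_combination hn

theorem starI_sub_starI_modEq {p : ℕ} (hp : p ≠ 0) {x₁ x₂ : ℝ} {m : ℤ}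
    (hm : x₁ - x₂ = m * (Lc / p)) (f : ℤ) (ε θ : ℝ) :
    starI ((f + ε) * x₁ + θ) - starI ((f + ε) * x₂ + θ) ≡ m * ε * (Lc / p) [PMOD (Lc / p)] := by
  refine ((starI_modEq_div hp _).sub (starI_modEq_div hp _)).trans
    (AddCommGroup.modEq_iff_eq_add_zsmul.2 ⟨-(f * m), ?_⟩)
  rw [zsmul_eq_mul]
  push_cast
  linear_combination -(f + ε) * hm

theorem constellation_min_distance_general (p : ℕ) (f : ℤ) (ε θ : ℝ) :
    ∀ x₁ ∈ constSet p, ∀ x₂ ∈ constSet p, x₁ ≠ x₂ →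
      (Lc / (p : ℝ)) * deltaP p ε
        ≤ |starI (((f : ℝ) + ε) * x₁ + θ) - starI (((f : ℝ) + ε) * x₂ + θ)| := by
  intro x₁ h₁ x₂ h₂ hne
  obtain ⟨m, hm, hmp, hsub⟩ := exists_sub_eq_mul_of_mem_constSet h₁ h₂ hne
  exact mul_deltaP_le_abs_of_modEq hm hmp (div_nonneg Lc_pos.le p.cast_nonneg)
    (starI_sub_starI_modEq (ne_zero_of_mem_constSet h₁) hsub f ε θ)

/-- **Lemma 11.** The minimum distance of the constellation
`{((f+ε)·x + θ)* : x ∈ Λ_p}` is at least `(L/p)·δ(p,ε)`. -/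
theorem constellation_min_distance
    (p : ℕ) (hp : p.Prime) (f : ℕ) (hf : f ≤ p - 1) (ε θ : ℝ) :
    ∀ x₁ ∈ constSet p, ∀ x₂ ∈ constSet p, x₁ ≠ x₂ →
      (Lc / (p : ℝ)) * deltaP p ε
        ≤ |starI (((f : ℝ) + ε) * x₁ + θ) - starI (((f : ℝ) + ε) * x₂ + θ)| := by
  exact_mod_cast constellation_min_distance_general p f ε θ
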